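/- Let X₀ be a proper subshift of X = 𝒜^(ℤ^d) and let φ : X → ℝ be a continuous potential such that: (1) φ = 0 on X₀ and φ(x) < 0 for all x ∉ X₀; (2) p_φ(1) = h_top(X₀); (3) ES(φ) (equilibrium states at β = 1) is exactly the set of measures of maximal entropy on X₀. Then there exists β_c ∈ (0,1] such that φ has a freezing phase transition at β_c; for every β > β_c, ES(βφ) equals the set of measures of maximal entropy on X₀; and for every β < β_c, every μ ∈ ES(βφ) satisfies μ(X₀) = 0. -/

import Mathlib

open MeasureTheory Filter Topology
open scoped ENNReal Classical

namespace Freezing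

/-- The configuration space `X = 𝒜^(ℤ^d)`. -/
abbrev Cfg (d : ℕ) (A : Type) : Type := (Fin d → ℤ) → A

section Defs

variable {d : ℕ} {A : Type} [Fintype A] [TopologicalSpace A] [DiscreteTopology A]
  [MeasurableSpace A] [BorelSpace A]

/-- The shift action: `(σ^n x)_m = x_{n+m}`. -/
def shift (n : Fin d → ℤ) (x : Cfg d A) : Cfg d A := fun m => x (n + m)

/-- Shift-invariance of a measure. -/
def Invariant (μ : Measure (Cfg d A)) : Prop :=
  ∀ n : Fin d → ℤ, Measure.map (shift n) μ = μ

/-- Cylinder set `[w]` for a pattern `w` on `E_n = ([0,n-1] ∩ ℤ)^d`. -/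
def cylE (n : ℕ) (w : (Fin d → Fin n) → A) : Set (Cfg d A) :=
  { x | ∀ m : Fin d → Fin n, x (fun i => ((m i : ℕ) : ℤ)) = w m }

/-- Measure-theoretic entropy `h(μ) = inf_{n ≥ 1} n^{-d} Σ_w (-μ[w] log μ[w])`. -/
noncomputable def entropy (μ : Measure (Cfg d A)) : ℝ :=
  ⨅ n : {n : ℕ // 1 ≤ n},
    ((n.1 : ℝ) ^ d)⁻¹ *
      ∑ w : (Fin d → Fin n.1) → A, Real.negMulLog (μ (cylE n.1 w)).toReal

/-- Pressure `p_φ(β) = sup { h(μ) + β ∫ φ dμ }` over shift-invariant probability measures. -/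
noncomputable def pressure (φ : Cfg d A → ℝ) (β : ℝ) : ℝ :=
  sSup { r | ∃ μ : Measure (Cfg d A), IsProbabilityMeasure μ ∧ Invariant μ ∧
    r = entropy μ + β * ∫ x, φ x ∂μ }

/-- The set of equilibrium states of `βφ`. -/
def ES (φ : Cfg d A → ℝ) (β : ℝ) : Set (Measure (Cfg d A)) :=
  { μ | IsProbabilityMeasure μ ∧ Invariant μ ∧
      entropy μ + β * ∫ x, φ x ∂μ = pressure φ β }

/-- `φ` has a freezing phase transition at `βc`. -/
def FreezingPT (φ : Cfg d A → ℝ) (βc : ℝ) : Prop :=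
  (∀ β β' : ℝ, βc < β → βc < β' → ES φ β = ES φ β') ∧
  (∀ β β' : ℝ, β < βc → βc < β' → ES φ β ≠ ES φ β')

/-- `s_φ = sup { ∫ φ dμ }` over shift-invariant probability measures. -/
noncomputable def sPhi (φ : Cfg d A → ℝ) : ℝ :=
  sSup { r | ∃ μ : Measure (Cfg d A), IsProbabilityMeasure μ ∧ Invariant μ ∧
    r = ∫ x, φ x ∂μ }

/-- The set of maximizing measures of `φ`. -/
def MM (φ : Cfg d A → ℝ) : Set (Measure (Cfg d A)) :=
  { μ | IsProbabilityMeasure μ ∧ Invariant μ ∧ (∫ x, φ x ∂μ) = sPhi φ }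

/-- `h_φ = sup { h(η) : η ∈ MM(φ) }`. -/
noncomputable def hPhi (φ : Cfg d A → ℝ) : ℝ :=
  sSup { r | ∃ μ ∈ MM φ, r = entropy μ }

/-- The zero-temperature accumulation points of `φ`. -/
def ZTA (φ : Cfg d A → ℝ) : Set (Measure (Cfg d A)) :=
  { μ | IsProbabilityMeasure μ ∧ Invariant μ ∧
      ∃ (β : ℕ → ℝ) (μs : ℕ → Measure (Cfg d A)),
        Tendsto β atTop atTop ∧ (∀ k, μs k ∈ ES φ (β k)) ∧
        ∀ f : Cfg d A → ℝ, Continuous f →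
          Tendsto (fun k => ∫ x, f x ∂(μs k)) atTop (𝓝 (∫ x, f x ∂μ)) }

/-- A subshift: nonempty, closed, invariant under every shift. -/
def IsSubshift (X₀ : Set (Cfg d A)) : Prop :=
  X₀.Nonempty ∧ IsClosed X₀ ∧ ∀ n : Fin d → ℤ, ∀ x ∈ X₀, shift n x ∈ X₀

/-- The language `L_{E_n}(X₀)`: patterns on `E_n` appearing at the origin of points of `X₀`. -/
def langE (X₀ : Set (Cfg d A)) (n : ℕ) : Set ((Fin d → Fin n) → A) :=
  { w | ∃ x ∈ X₀, ∀ m : Fin d → Fin n, x (fun i => ((m i : ℕ) : ℤ)) = w m }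

/-- Topological entropy `h_top(X₀) = inf_{n ≥ 1} n^{-d} log |L_{E_n}(X₀)|`. -/
noncomputable def topEnt (X₀ : Set (Cfg d A)) : ℝ :=
  ⨅ n : {n : ℕ // 1 ≤ n}, ((n.1 : ℝ) ^ d)⁻¹ * Real.log ((langE X₀ n.1).ncard)

/-- A measure of maximal entropy on the subshift `X₀`. -/
def IsMME (X₀ : Set (Cfg d A)) (μ : Measure (Cfg d A)) : Prop :=
  IsProbabilityMeasure μ ∧ Invariant μ ∧ μ X₀ = 1 ∧ entropy μ = topEnt X₀

/-- Ergodicity: invariant Borel sets have measure `0` or `1`. -/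
def ErgodicInv (μ : Measure (Cfg d A)) : Prop :=
  ∀ s : Set (Cfg d A), MeasurableSet s → (∀ n : Fin d → ℤ, shift n ⁻¹' s = s) →
    μ s = 0 ∨ μ s = 1

/-- The `n`-th variation `var_n φ`, over pairs agreeing on `B_n = ([-n,n] ∩ ℤ)^d`. -/
noncomputable def varPot (φ : Cfg d A → ℝ) (n : ℕ) : ℝ :=
  sSup { r | ∃ x y : Cfg d A,
    (∀ m : Fin d → ℤ, (∀ i, |m i| ≤ (n : ℤ)) → x m = y m) ∧ r = |φ x - φ y| }

/-- Sup-norm `‖m‖_∞` of a site `m ∈ ℤ^d`. -/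
def supNorm (m : Fin d → ℤ) : ℕ := Finset.univ.sup fun i => (m i).natAbs

/-- The metric `dist(x,y) = 2^{-min{‖n‖_∞ : x_n ≠ y_n}}`. -/
noncomputable def cfgDist (x y : Cfg d A) : ℝ :=
  if x = y then 0
  else (2 : ℝ) ^
    (-((sInf { k : ℕ | ∃ m : Fin d → ℤ, supNorm m = k ∧ x m ≠ y m } : ℕ) : ℤ))

/-- Distance from a point to a subshift. -/
noncomputable def distToSub (X₀ : Set (Cfg d A)) (x : Cfg d A) : ℝ :=
  sInf { r | ∃ y ∈ X₀, r = cfgDist x y }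

end Defs

/-!
Entropy is convex (in fact affine) in the measure, so conditioning an equilibrium state `μ` of `βφ`
on an invariant set of positive measure gives another equilibrium state. If `μ X₀ ≠ 0` then, as `φ`
vanishes on `X₀`, the conditional state has the same free energy at every temperature; its entropy
is therefore the pressure at `β`, and bounds the pressure at every other inverse temperature from
below. Hence as long as the pressure exceeds `h_top(X₀)`, no equilibrium state charges `X₀`. As
`φ ≤ 0`, the pressure is nonincreasing, and a measure of maximal entropy on `X₀` keeps it at least
`h_top(X₀)`, so it is constant beyond any point where it reaches that value; past such a point
equilibrium states must satisfy `∫ φ dμ = 0`, i.e. be carried by `X₀`. The critical point `β_c` is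
the infimum of these points. It is positive because `X₀` misses a pattern, so that the pressure
lies above a line with value `log |𝒜| > h_top(X₀)` at `0`.
-/

open scoped NNReal

section ShannonEntropy

variable {Ω ι κ : Type*} [MeasurableSpace Ω] [Fintype ι]

/-- Shannon entropy of the law under `μ` of an observable `f` with finitely many values. -/
noncomputable def shannonEntropy (μ : Measure Ω) (f : Ω → ι) : ℝ :=
  ∑ i, Real.negMulLog (μ.real (f ⁻¹' {i}))

lemma shannonEntropy_nonneg (μ : Measure Ω) [IsZeroOrProbabilityMeasure μ] (f : Ω → ι) :
    0 ≤ shannonEntropy μ f :=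
  Finset.sum_nonneg fun _ _ => Real.negMulLog_nonneg measureReal_nonneg measureReal_le_one

lemma shannonEntropy_equiv_comp [Fintype κ] (μ : Measure Ω) (f : Ω → ι) (e : ι ≃ κ) :
    shannonEntropy μ (e ∘ f) = shannonEntropy μ f := by
  have fiber (i) : e ∘ f ⁻¹' {e i} = f ⁻¹' {i} := by ext x; simp
  simp only [shannonEntropy, ← e.sum_comp, fiber]

variable [MeasurableSpace ι] [MeasurableSingletonClass ι]

lemma shannonEntropy_map {Ω' : Type*} [MeasurableSpace Ω'] (μ : Measure Ω) {g : Ω → Ω'}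
    (hg : Measurable g) {f : Ω' → ι} (hf : Measurable f) :
    shannonEntropy (μ.map g) f = shannonEntropy μ (f ∘ g) := by
  simp only [shannonEntropy, map_measureReal_apply hg (hf (.singleton _)), Set.preimage_comp]

lemma sum_measureReal_preimage_mul (μ : Measure Ω) [IsFiniteMeasure μ] {f : Ω → ι}
    (hf : Measurable f) (g : ι → ℝ) :
    ∑ i, μ.real (f ⁻¹' {i}) * g i = ∫ x, g (f x) ∂μ := by
  rw [← integral_map (f := g) hf.aemeasurable Measurable.of_discrete.aestronglyMeasurable,
    integral_fintype Integrable.of_finite]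
  simp only [map_measureReal_apply hf (.singleton _), smul_eq_mul]

lemma sum_measureReal_preimage_eq_one (μ : Measure Ω) [IsProbabilityMeasure μ] {f : Ω → ι}
    (hf : Measurable f) : ∑ i, μ.real (f ⁻¹' {i}) = 1 := by
  simpa using sum_measureReal_preimage_mul μ hf fun _ => 1

lemma negMulLog_le_neg_mul_log_add_sub {p q : ℝ} (hp : 0 ≤ p) (hq : 0 ≤ q) (hpq : q = 0 → p = 0) :
    Real.negMulLog p ≤ -(p * Real.log q) + (q - p) := by
  rcases hp.eq_or_lt with rfl | hp
  · simpa using hq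
  have hq : 0 < q := hq.lt_of_ne' (mt hpq hp.ne')
  calc Real.negMulLog p = -(p * Real.log q) + p * Real.log (q / p) := by
        rw [Real.log_div hq.ne' hp.ne', Real.negMulLog]; ring
    _ ≤ -(p * Real.log q) + p * (q / p - 1) := by
        gcongr; exact Real.log_le_sub_one_of_pos (div_pos hq hp)
    _ = -(p * Real.log q) + (q - p) := by field_simp

lemma sum_negMulLog_le_sum_neg_mul_log {ι : Type*} (s : Finset ι) {p q : ι → ℝ}
    (hp : ∀ i ∈ s, 0 ≤ p i) (hq : ∀ i ∈ s, 0 ≤ q i) (hpq : ∀ i ∈ s, q i = 0 → p i = 0)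
    (hsum : ∑ i ∈ s, q i ≤ ∑ i ∈ s, p i) :
    ∑ i ∈ s, Real.negMulLog (p i) ≤ ∑ i ∈ s, -(p i * Real.log (q i)) :=
  calc ∑ i ∈ s, Real.negMulLog (p i)
      ≤ ∑ i ∈ s, (-(p i * Real.log (q i)) + (q i - p i)) := Finset.sum_le_sum fun i hi =>
        negMulLog_le_neg_mul_log_add_sub (hp i hi) (hq i hi) (hpq i hi)
    _ = ∑ i ∈ s, -(p i * Real.log (q i)) + (∑ i ∈ s, q i - ∑ i ∈ s, p i) := by
        rw [Finset.sum_add_distrib, Finset.sum_sub_distrib]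
    _ ≤ ∑ i ∈ s, -(p i * Real.log (q i)) := by linarith

lemma shannonEntropy_pi_le_sum [Fintype κ] [DecidableEq κ] (μ : Measure Ω)
    [IsProbabilityMeasure μ] {f : κ → Ω → ι} (hf : ∀ b, Measurable (f b)) :
    shannonEntropy μ (fun x b => f b x) ≤ ∑ b, shannonEntropy μ (f b) := by
  have hF : Measurable fun x b => f b x := measurable_pi_lambda _ hf
  set p : (κ → ι) → ℝ := fun v => μ.real ((fun x b => f b x) ⁻¹' {v})
  set q : κ → ι → ℝ := fun b i => μ.real (f b ⁻¹' {i})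
  have p_eq_zero {v b} (h : q b (v b) = 0) : p v = 0 :=
    measureReal_mono_null (show _ ⊆ f b ⁻¹' {v b} from fun x hx => congrFun hx b) h
  have log_prod (v) : p v * Real.log (∏ b, q b (v b)) = ∑ b, p v * Real.log (q b (v b)) := by
    by_cases h : ∃ b, q b (v b) = 0
    · simp [p_eq_zero h.choose_spec]
    · push Not at h
      rw [Real.log_prod fun b _ => h b, Finset.mul_sum]
  have marginal (b) : ∑ v, p v * Real.log (q b (v b)) = -shannonEntropy μ (f b) := by
    rw [sum_measureReal_preimage_mul μ hF fun v => Real.log (q b (v b)),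
      ← sum_measureReal_preimage_mul μ (hf b) fun i => Real.log (q b i)]
    simp [shannonEntropy, Real.negMulLog, q]
  calc shannonEntropy μ (fun x b => f b x)
      ≤ ∑ v, -(p v * Real.log (∏ b, q b (v b))) := by
        refine sum_negMulLog_le_sum_neg_mul_log _ (fun _ _ => measureReal_nonneg)
          (fun _ _ => Finset.prod_nonneg fun _ _ => measureReal_nonneg) (fun v _ hv => ?_) ?_
        · obtain ⟨b, -, hb⟩ := Finset.prod_eq_zero_iff.1 hv
          exact p_eq_zero hb
        · rw [sum_measureReal_preimage_eq_one μ hF, ← Fintype.prod_sum]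
          simp [q, sum_measureReal_preimage_eq_one μ (hf _)]
    _ = ∑ b, shannonEntropy μ (f b) := by
        simp only [log_prod, Finset.sum_neg_distrib]
        rw [Finset.sum_comm]
        simp only [marginal, Finset.sum_neg_distrib, neg_neg]

lemma negMulLog_add_le {x y : ℝ} (hx : 0 ≤ x) (hy : 0 ≤ y) :
    Real.negMulLog (x + y) ≤ Real.negMulLog x + Real.negMulLog y := by
  rcases hx.eq_or_lt with rfl | hx
  · simp
  rcases hy.eq_or_lt with rfl | hy
  · simp
  have hx' : x * Real.log x ≤ x * Real.log (x + y) := by gcongr; linarith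
  have hy' : y * Real.log y ≤ y * Real.log (x + y) := by gcongr; linarith
  simp only [Real.negMulLog]
  linarith

lemma shannonEntropy_convexComb_le (ν₀ ν₁ : Measure Ω) [IsProbabilityMeasure ν₀]
    [IsProbabilityMeasure ν₁] {a b : ℝ≥0} (hab : a + b = 1) {f : Ω → ι} (hf : Measurable f) :
    shannonEntropy (a • ν₀ + b • ν₁) f ≤
      a * shannonEntropy ν₀ f + b * shannonEntropy ν₁ f + Real.log 2 := by
  have hb : (b : ℝ) = 1 - a := eq_sub_of_add_eq' (by exact_mod_cast hab)
  have pointwise (i) : Real.negMulLog ((a • ν₀ + b • ν₁ : Measure Ω).real (f ⁻¹' {i})) ≤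
      a * Real.negMulLog (ν₀.real (f ⁻¹' {i})) + b * Real.negMulLog (ν₁.real (f ⁻¹' {i})) +
      (ν₀.real (f ⁻¹' {i}) * Real.negMulLog a + ν₁.real (f ⁻¹' {i}) * Real.negMulLog b) := by
    rw [measureReal_add_apply, measureReal_nnreal_smul_apply, measureReal_nnreal_smul_apply]
    refine (negMulLog_add_le (by positivity) (by positivity)).trans_eq ?_
    rw [Real.negMulLog_mul, Real.negMulLog_mul]
    ring
  calc shannonEntropy (a • ν₀ + b • ν₁) f
      ≤ a * shannonEntropy ν₀ f + b * shannonEntropy ν₁ f + Real.binEntropy a := by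
        refine (Finset.sum_le_sum fun i _ => pointwise i).trans_eq ?_
        rw [Real.binEntropy_eq_negMulLog_add_negMulLog_one_sub, ← hb]
        simp only [Finset.sum_add_distrib, ← Finset.mul_sum, ← Finset.sum_mul,
          sum_measureReal_preimage_eq_one _ hf, one_mul, shannonEntropy]
    _ ≤ _ := by gcongr; exact Real.binEntropy_le_log_two

end ShannonEntropy

section Box

variable {d : ℕ} {A : Type}

/-- The site of `E_n ⊆ ℤ^d` with the given coordinates. -/
def boxSite {n : ℕ} (m : Fin d → Fin n) : Fin d → ℤ := fun i => ((m i : ℕ) : ℤ)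

lemma boxSite_injective {n : ℕ} :
    Function.Injective (boxSite : (Fin d → Fin n) → Fin d → ℤ) := fun m m' h =>
  funext fun i => Fin.ext (by simpa [boxSite] using congrFun h i)

lemma exists_boxSite_eq {n : ℕ} {m : Fin d → ℤ} (hm : ∀ i, 0 ≤ m i ∧ m i < n) :
    ∃ m' : Fin d → Fin n, boxSite m' = m :=
  ⟨fun i => ⟨(m i).toNat, by have := hm i; omega⟩, funext fun i => Int.toNat_of_nonneg (hm i).1⟩

/-- The pattern `x|_{E_n}` of a configuration on the box `E_n`. -/
def boxPattern (n : ℕ) (x : Cfg d A) : (Fin d → Fin n) → A := fun m => x (boxSite m)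

lemma cylE_eq_preimage_boxPattern (n : ℕ) (w : (Fin d → Fin n) → A) :
    cylE n w = boxPattern n ⁻¹' {w} :=
  Set.ext fun _ => funext_iff.symm

/-- Tiling of `E_{kn}` by `E_n`-blocks indexed by `E_k`: the pair `(b, m)` is the site `m` of the
block with corner `n b`. -/
def blockSite (d k n : ℕ) : (Fin d → Fin k) × (Fin d → Fin n) ≃ (Fin d → Fin (k * n)) :=
  (Equiv.arrowProdEquivProdArrow _ _ _).symm.trans ((Equiv.refl _).arrowCongr finProdFinEquiv)

lemma boxSite_blockSite {k n : ℕ} (b : Fin d → Fin k) (m : Fin d → Fin n) :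
    boxSite (blockSite d k n (b, m)) = n • boxSite b + boxSite m := by
  funext i
  simp [boxSite, blockSite, Equiv.arrowProdEquivProdArrow, finProdFinEquiv, add_comm]

/-- Assembles a pattern on `E_{kn}` from its `E_n`-blocks. -/
def assembleBlocks (d k n : ℕ) (A : Type) :
    ((Fin d → Fin k) → (Fin d → Fin n) → A) ≃ ((Fin d → Fin (k * n)) → A) :=
  (Equiv.curry _ _ _).symm.trans ((blockSite d k n).arrowCongr (Equiv.refl A))

lemma assembleBlocks_boxPattern_shift (k n : ℕ) (x : Cfg d A) :
    assembleBlocks d k n A (fun b => boxPattern n (shift (n • boxSite b) x)) =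
      boxPattern (k * n) x := by
  rw [← Equiv.eq_symm_apply]
  funext b m
  exact congrArg x (boxSite_blockSite b m).symm

lemma shift_neg_shift (n : Fin d → ℤ) (x : Cfg d A) : shift (-n) (shift n x) = x := by
  funext m
  simp [shift]

lemma measurable_shift [MeasurableSpace A] (n : Fin d → ℤ) :
    Measurable (shift n : Cfg d A → Cfg d A) :=
  measurable_pi_lambda _ fun _ => measurable_pi_apply _

lemma continuous_shift [TopologicalSpace A] (n : Fin d → ℤ) :
    Continuous (shift n : Cfg d A → Cfg d A) :=
  continuous_pi fun _ => continuous_apply _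

lemma measurable_boxPattern [MeasurableSpace A] (n : ℕ) :
    Measurable (boxPattern n : Cfg d A → _) :=
  measurable_pi_lambda _ fun _ => measurable_pi_apply _

lemma continuous_boxPattern [TopologicalSpace A] (n : ℕ) :
    Continuous (boxPattern n : Cfg d A → _) :=
  continuous_pi fun _ => continuous_apply _

end Box

section Entropy

variable {d : ℕ} {A : Type} [Fintype A] [MeasurableSpace A]

/-- Entropy per site of the restriction of `μ` to the box `E_n`. -/
noncomputable def boxEntropy (μ : Measure (Cfg d A)) (n : ℕ) : ℝ :=
  ((n : ℝ) ^ d)⁻¹ * shannonEntropy μ (boxPattern n)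

lemma boxEntropy_nonneg (μ : Measure (Cfg d A)) [IsZeroOrProbabilityMeasure μ] (n : ℕ) :
    0 ≤ boxEntropy μ n :=
  mul_nonneg (by positivity) (shannonEntropy_nonneg μ _)

lemma entropy_eq_iInf_boxEntropy (μ : Measure (Cfg d A)) :
    entropy μ = ⨅ n : {n : ℕ // 1 ≤ n}, boxEntropy μ n := by
  simp only [entropy, boxEntropy, shannonEntropy, cylE_eq_preimage_boxPattern, measureReal_def]

lemma bddBelow_range_boxEntropy (μ : Measure (Cfg d A)) [IsZeroOrProbabilityMeasure μ] :
    BddBelow (Set.range fun n : {n : ℕ // 1 ≤ n} => boxEntropy μ n) :=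
  ⟨0, Set.forall_mem_range.2 fun _ => boxEntropy_nonneg μ _⟩

lemma entropy_le_boxEntropy (μ : Measure (Cfg d A)) [IsZeroOrProbabilityMeasure μ] {n : ℕ}
    (hn : 1 ≤ n) : entropy μ ≤ boxEntropy μ n :=
  (entropy_eq_iInf_boxEntropy μ).trans_le (ciInf_le (bddBelow_range_boxEntropy μ) ⟨n, hn⟩)

variable [MeasurableSingletonClass A]

lemma boxEntropy_mul_le {μ : Measure (Cfg d A)} [IsProbabilityMeasure μ] (hμ : Invariant μ)
    (k n : ℕ) : boxEntropy μ (k * n) ≤ boxEntropy μ n := by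
  have block_entropy (v : Fin d → ℤ) :
      shannonEntropy μ (boxPattern n ∘ shift v) = shannonEntropy μ (boxPattern n) := by
    rw [← shannonEntropy_map μ (measurable_shift v) (measurable_boxPattern n), hμ]
  have subadditive :
      shannonEntropy μ (boxPattern (k * n)) ≤ (k : ℝ) ^ d * shannonEntropy μ (boxPattern n) :=
    calc shannonEntropy μ (boxPattern (k * n))
        = shannonEntropy μ fun x (b : Fin d → Fin k) =>
            (boxPattern n ∘ shift (n • boxSite b)) x := by
          rw [← shannonEntropy_equiv_comp μ _ (assembleBlocks d k n A)]
          exact congrArg _ (funext fun x => (assembleBlocks_boxPattern_shift k n x).symm)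
      _ ≤ ∑ b : Fin d → Fin k, shannonEntropy μ (boxPattern n ∘ shift (n • boxSite b)) :=
          shannonEntropy_pi_le_sum μ fun b => (measurable_boxPattern n).comp (measurable_shift _)
      _ = (k : ℝ) ^ d * shannonEntropy μ (boxPattern n) := by simp [block_entropy]
  calc boxEntropy μ (k * n)
      ≤ (((k * n : ℕ) : ℝ) ^ d)⁻¹ * ((k : ℝ) ^ d * shannonEntropy μ (boxPattern n)) := by
        unfold boxEntropy; gcongr
    _ = (((k : ℝ) ^ d)⁻¹ * (k : ℝ) ^ d) * boxEntropy μ n := by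
        rw [boxEntropy, Nat.cast_mul, mul_pow, mul_inv]; ring
    _ ≤ boxEntropy μ n := mul_le_of_le_one_left (boxEntropy_nonneg μ n) inv_mul_le_one

lemma boxEntropy_convexComb_le (ν₀ ν₁ : Measure (Cfg d A)) [IsProbabilityMeasure ν₀]
    [IsProbabilityMeasure ν₁] {a b : ℝ≥0} (hab : a + b = 1) (n : ℕ) :
    boxEntropy (a • ν₀ + b • ν₁) n ≤
      a * boxEntropy ν₀ n + b * boxEntropy ν₁ n + ((n : ℝ) ^ d)⁻¹ * Real.log 2 := by
  unfold boxEntropy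
  have h := shannonEntropy_convexComb_le ν₀ ν₁ hab (measurable_boxPattern (d := d) (A := A) n)
  refine (mul_le_mul_of_nonneg_left h (by positivity)).trans_eq ?_
  ring

lemma isProbabilityMeasure_convexComb {Ω : Type*} [MeasurableSpace Ω] (ν₀ ν₁ : Measure Ω)
    [IsProbabilityMeasure ν₀] [IsProbabilityMeasure ν₁] {a b : ℝ≥0} (hab : a + b = 1) :
    IsProbabilityMeasure (a • ν₀ + b • ν₁) :=
  ⟨by simp [← ENNReal.coe_add, hab]⟩

lemma entropy_convexComb_le (hd : 1 ≤ d) {ν₀ ν₁ : Measure (Cfg d A)} [IsProbabilityMeasure ν₀]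
    [IsProbabilityMeasure ν₁] (h₀ : Invariant ν₀) (h₁ : Invariant ν₁) {a b : ℝ≥0}
    (hab : a + b = 1) :
    entropy (a • ν₀ + b • ν₁) ≤ a * entropy ν₀ + b * entropy ν₁ := by
  have := isProbabilityMeasure_convexComb ν₀ ν₁ hab
  have : Nonempty {n : ℕ // 1 ≤ n} := ⟨⟨1, le_rfl⟩⟩
  simp only [entropy_eq_iInf_boxEntropy ν₀, entropy_eq_iInf_boxEntropy ν₁,
    Real.mul_iInf_of_nonneg (NNReal.coe_nonneg _)]
  refine le_ciInf_add_ciInf fun ⟨n₀, hn₀⟩ ⟨n₁, hn₁⟩ => ?_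
  have hbound (k : ℕ) (hk : 1 ≤ k) : entropy (a • ν₀ + b • ν₁) ≤
      a * boxEntropy ν₀ n₀ + b * boxEntropy ν₁ n₁ +
        (((k * (n₀ * n₁) : ℕ) : ℝ) ^ d)⁻¹ * Real.log 2 := by
    have hN : 1 ≤ k * (n₀ * n₁) := Nat.mul_pos hk (Nat.mul_pos hn₀ hn₁)
    have e₀ : boxEntropy ν₀ (k * (n₀ * n₁)) ≤ boxEntropy ν₀ n₀ := by
      rw [show k * (n₀ * n₁) = k * n₁ * n₀ by ring]; exact boxEntropy_mul_le h₀ _ _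
    have e₁ : boxEntropy ν₁ (k * (n₀ * n₁)) ≤ boxEntropy ν₁ n₁ := by
      rw [← mul_assoc]; exact boxEntropy_mul_le h₁ _ _
    refine ((entropy_le_boxEntropy _ hN).trans (boxEntropy_convexComb_le ν₀ ν₁ hab _)).trans ?_
    gcongr
  have hlim :
      Tendsto (fun k : ℕ => (((k * (n₀ * n₁) : ℕ) : ℝ) ^ d)⁻¹ * Real.log 2) atTop (𝓝 0) := by
    rw [← zero_mul (Real.log 2)]
    refine Tendsto.mul_const _ (((tendsto_pow_atTop (by omega)).comp
      (tendsto_natCast_atTop_atTop.comp ?_)).inv_tendsto_atTop)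
    exact tendsto_id.atTop_mul_const' (Nat.mul_pos hn₀ hn₁)
  refine ge_of_tendsto (by simpa using hlim.const_add _) ((eventually_ge_atTop 1).mono hbound)

end Entropy

section Bernoulli

variable {d : ℕ} {A : Type} [MeasurableSpace A]

lemma invariant_infinitePi_const (p : Measure A) [IsProbabilityMeasure p] :
    Invariant (Measure.infinitePi fun _ : Fin d → ℤ => p) := by
  intro n
  have shift_eq : (shift n : Cfg d A → Cfg d A) =
      MeasurableEquiv.piCongrLeft (fun _ : Fin d → ℤ => A) (Equiv.addLeft (-n)) := by
    funext x m
    obtain ⟨m, rfl⟩ := (Equiv.addLeft (-n)).surjective m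
    rw [MeasurableEquiv.coe_piCongrLeft, Equiv.piCongrLeft_apply_apply]
    simp [shift]
  rw [shift_eq]
  exact Measure.infinitePi_map_piCongrLeft (fun _ : Fin d → ℤ => p) (Equiv.addLeft (-n))

lemma infinitePi_const_preimage_boxPattern [MeasurableSingletonClass A] (p : Measure A)
    [IsProbabilityMeasure p] (n : ℕ) (w : (Fin d → Fin n) → A) :
    Measure.infinitePi (fun _ : Fin d → ℤ => p) (boxPattern n ⁻¹' {w}) = ∏ m, p {w m} := by
  set t : (Fin d → ℤ) → Set A := Function.extend boxSite (fun m => {w m}) fun _ => Set.univ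
  have t_boxSite (m) : t (boxSite m) = {w m} := boxSite_injective.extend_apply _ _ m
  have preimage_eq_pi : boxPattern n ⁻¹' {w} =
      Set.pi (Finset.univ.image (boxSite : (Fin d → Fin n) → Fin d → ℤ)) t := by
    ext x
    simp only [Set.mem_preimage, Set.mem_singleton_iff, funext_iff, Set.mem_pi, Finset.coe_image,
      Finset.coe_univ, Set.image_univ, Set.forall_mem_range, t_boxSite, boxPattern]
  rw [preimage_eq_pi, Measure.infinitePi_pi, Finset.prod_image boxSite_injective.injOn]
  · simp only [t_boxSite]
  · simp only [Finset.mem_image, Finset.mem_univ, true_and, forall_exists_index,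
      forall_apply_eq_imp_iff, t_boxSite, MeasurableSet.singleton, implies_true]

variable [Fintype A] [Nonempty A]

/-- The Bernoulli measure on `𝒜^(ℤ^d)` with uniform marginals. -/
noncomputable def uniformBernoulli (d : ℕ) (A : Type) [MeasurableSpace A] [Fintype A]
    [Nonempty A] : Measure (Cfg d A) :=
  Measure.infinitePi fun _ => (PMF.uniformOfFintype A).toMeasure

instance : IsProbabilityMeasure (uniformBernoulli d A) := by
  unfold uniformBernoulli; infer_instance

lemma invariant_uniformBernoulli : Invariant (uniformBernoulli d A) :=
  invariant_infinitePi_const _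

lemma entropy_uniformBernoulli [MeasurableSingletonClass A] :
    entropy (uniformBernoulli d A) = Real.log (Fintype.card A) := by
  have : Nonempty {n : ℕ // 1 ≤ n} := ⟨⟨1, le_rfl⟩⟩
  have measureReal_pattern (n : ℕ) (w : (Fin d → Fin n) → A) :
      (uniformBernoulli d A).real (boxPattern n ⁻¹' {w}) =
        ((Fintype.card A : ℝ) ^ n ^ d)⁻¹ := by
    rw [measureReal_def, uniformBernoulli, infinitePi_const_preimage_boxPattern]
    simp
  have boxEntropy_eq (n : {n : ℕ // 1 ≤ n}) :
      boxEntropy (uniformBernoulli d A) n = Real.log (Fintype.card A) := by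
    have : ((n : ℕ) : ℝ) ≠ 0 := by exact_mod_cast Nat.one_le_iff_ne_zero.1 n.2
    simp only [boxEntropy, shannonEntropy, measureReal_pattern, Real.negMulLog, Real.log_inv,
      Real.log_pow, Finset.sum_const, Finset.card_univ, Fintype.card_fun, Fintype.card_fin,
      nsmul_eq_mul, Nat.cast_pow]
    field_simp
  simp only [entropy_eq_iInf_boxEntropy, boxEntropy_eq, ciInf_const]

end Bernoulli

section Subshift

variable {d : ℕ} {A : Type} [TopologicalSpace A] {X₀ : Set (Cfg d A)}

lemma IsSubshift.preimage_shift (hX₀ : IsSubshift X₀) (n : Fin d → ℤ) :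
    shift n ⁻¹' X₀ = X₀ :=
  Set.Subset.antisymm (fun x hx => shift_neg_shift n x ▸ hX₀.2.2 (-n) _ hx) (hX₀.2.2 n)

lemma IsSubshift.exists_langE_ne_univ (hX₀ : IsSubshift X₀) (hne : X₀ ≠ Set.univ) :
    ∃ n, 1 ≤ n ∧ langE X₀ n ≠ Set.univ := by
  obtain ⟨x, hx⟩ := (Set.ne_univ_iff_exists_notMem X₀).1 hne
  obtain ⟨I, u, hu, hIu⟩ := isOpen_pi_iff.1 hX₀.2.1.isOpen_compl x hx
  obtain ⟨M, hM⟩ : ∃ M : ℕ, ∀ m ∈ I, ∀ i, (m i).natAbs ≤ M :=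
    ⟨I.sup supNorm, fun m hm i =>
      (Finset.le_sup (f := fun i => (m i).natAbs) (Finset.mem_univ i)).trans
        (Finset.le_sup (f := supNorm) hm)⟩
  -- Shifting by `c` moves `E_{2M+1}` to the centred box `[-M, M]^d`, which contains `I`.
  let c : Fin d → ℤ := fun _ => M
  refine ⟨2 * M + 1, by omega, (Set.ne_univ_iff_exists_notMem _).2
    ⟨boxPattern (2 * M + 1) (shift (-c) x), ?_⟩⟩
  rintro ⟨y, hy, hyx⟩
  refine hIu (a := shift c y) (fun m hm => ?_) (hX₀.2.2 c y hy)
  obtain ⟨s, hs⟩ : ∃ s : Fin d → Fin (2 * M + 1), boxSite s = c + m :=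
    exists_boxSite_eq fun i => by
      have := hM m hm i
      simp only [c, Pi.add_apply]
      omega
  have agree : y (boxSite s) = x (-c + boxSite s) := hyx s
  rw [hs, neg_add_cancel_left] at agree
  exact (agree ▸ (hu m hm).2 : y (c + m) ∈ u m)

lemma IsSubshift.topEnt_lt_log_card [Fintype A] (hX₀ : IsSubshift X₀) (hne : X₀ ≠ Set.univ) :
    topEnt X₀ < Real.log (Fintype.card A) := by
  obtain ⟨n, hn, hlang⟩ := hX₀.exists_langE_ne_univ hne
  have ncard_lt : (langE X₀ n).ncard < Fintype.card A ^ n ^ d := by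
    simpa using Set.ncard_lt_card hlang
  have ncard_pos : 0 < (langE X₀ n).ncard :=
    (Set.ncard_pos).2 ⟨boxPattern n hX₀.1.some, _, hX₀.1.some_mem, fun _ => rfl⟩
  have bddBelow : BddBelow (Set.range fun n : {n : ℕ // 1 ≤ n} =>
      ((n : ℝ) ^ d)⁻¹ * Real.log (langE X₀ n).ncard) :=
    ⟨0, Set.forall_mem_range.2 fun _ => by positivity⟩
  calc topEnt X₀ ≤ ((n : ℝ) ^ d)⁻¹ * Real.log (langE X₀ n).ncard := ciInf_le bddBelow ⟨n, hn⟩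
    _ < ((n : ℝ) ^ d)⁻¹ * Real.log ((Fintype.card A : ℝ) ^ n ^ d) := by
        gcongr
        exact_mod_cast ncard_lt
    _ = Real.log (Fintype.card A) := by
        have : (n : ℝ) ≠ 0 := by positivity
        rw [Real.log_pow]
        push_cast
        field_simp

end Subshift

section Integral

variable {Ω : Type*} [MeasurableSpace Ω]

lemma smul_cond_add_smul_cond_compl (μ : Measure Ω) [IsFiniteMeasure μ] {s : Set Ω}
    (hs : MeasurableSet s) :
    (μ s).toNNReal • ProbabilityTheory.cond μ s +
      (μ sᶜ).toNNReal • ProbabilityTheory.cond μ sᶜ = μ := by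
  ext t _
  rw [← ProbabilityTheory.cond_add_cond_compl_eq hs μ (t := t)]
  simp [ENNReal.smul_def, mul_comm]

lemma integral_eq_zero_iff_measure_eq_one {μ : Measure Ω} [IsProbabilityMeasure μ] {f : Ω → ℝ}
    (hf : Integrable f μ) (hf_nonpos : f ≤ 0) {s : Set Ω} (hs : MeasurableSet s)
    (hf_zero : ∀ x, f x = 0 ↔ x ∈ s) : ∫ x, f x ∂μ = 0 ↔ μ s = 1 := by
  rw [← mem_ae_iff_prob_eq_one hs, ← neg_eq_zero, ← integral_neg,
    integral_eq_zero_iff_of_nonneg (fun x => neg_nonneg.2 (hf_nonpos x)) hf.neg]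
  exact eventually_congr (.of_forall fun x => neg_eq_zero.trans (hf_zero x))

lemma integral_eq_zero_of_measure_eq_one {μ : Measure Ω} [IsProbabilityMeasure μ] {f : Ω → ℝ}
    {s : Set Ω} (hs : MeasurableSet s) (hf_zero : ∀ x ∈ s, f x = 0) (hμ : μ s = 1) :
    ∫ x, f x ∂μ = 0 :=
  integral_eq_zero_of_ae (mem_of_superset ((mem_ae_iff_prob_eq_one hs).2 hμ) hf_zero)

variable [TopologicalSpace Ω] [OpensMeasurableSpace Ω]

lemma continuous_measureReal_of_isClopen [HasOuterApproxClosed Ω] {s : Set Ω} (hs : IsClopen s) :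
    Continuous fun μ : ProbabilityMeasure Ω => (μ : Measure Ω).real s :=
  continuous_iff_continuousAt.2 fun _ => (NNReal.continuous_coe.tendsto _).comp
    (ProbabilityMeasure.tendsto_measure_of_isClopen_of_tendsto tendsto_id hs)

variable [CompactSpace Ω] {f : Ω → ℝ}

lemma continuous_integral_probabilityMeasure (hf : Continuous f) :
    Continuous fun μ : ProbabilityMeasure Ω => ∫ x, f x ∂(μ : Measure Ω) :=
  ProbabilityMeasure.continuous_integral_boundedContinuousFunction
    (BoundedContinuousFunction.mkOfCompact ⟨f, hf⟩)

lemma integrable_of_continuous (hf : Continuous f) (μ : Measure Ω) [IsFiniteMeasure μ] :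
    Integrable f μ :=
  hf.integrable_of_hasCompactSupport (.of_compactSpace f)

end Integral

section EquilibriumStates

variable {d : ℕ} {A : Type} [MeasurableSpace A]

lemma Invariant.cond {μ : Measure (Cfg d A)} (hμ : Invariant μ) {s : Set (Cfg d A)}
    (hs : MeasurableSet s) (hinv : ∀ n, shift n ⁻¹' s = s) :
    Invariant (ProbabilityTheory.cond μ s) := by
  intro n
  rw [ProbabilityTheory.cond, Measure.map_smul]
  nth_rw 2 [← hinv n]
  rw [← Measure.restrict_map (measurable_shift n) hs, hμ]

variable [TopologicalSpace A] [DiscreteTopology A] [BorelSpace A]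

lemma isClosed_setOf_invariant [Finite A] :
    IsClosed {μ : ProbabilityMeasure (Cfg d A) | Invariant (μ : Measure (Cfg d A))} := by
  have : {μ : ProbabilityMeasure (Cfg d A) | Invariant (μ : Measure (Cfg d A))} =
      ⋂ n, {μ | μ.map (measurable_shift n).aemeasurable = μ} := by
    ext μ
    simp only [Set.mem_iInter, Set.mem_ofPred_eq, Invariant]
    exact forall_congr' fun n =>
      (Subtype.ext_iff (a1 := μ.map (measurable_shift n).aemeasurable) (a2 := μ)).symm
  rw [this]
  exact isClosed_iInter fun n =>
    isClosed_eq (ProbabilityMeasure.continuous_map (continuous_shift n)) continuous_id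

variable [Fintype A] {φ : Cfg d A → ℝ}

lemma upperSemicontinuous_entropy :
    UpperSemicontinuous fun μ : ProbabilityMeasure (Cfg d A) =>
      entropy (μ : Measure (Cfg d A)) := by
  have : Nonempty {n : ℕ // 1 ≤ n} := ⟨⟨1, le_rfl⟩⟩
  simp only [entropy_eq_iInf_boxEntropy]
  refine upperSemicontinuous_ciInf (fun μ => bddBelow_range_boxEntropy _) fun n =>
    (continuous_const.mul <| continuous_finsetSum _ fun w _ =>
      Real.continuous_negMulLog.comp <| continuous_measureReal_of_isClopen ?_).upperSemicontinuous
  exact (isClopen_discrete {w}).preimage (continuous_boxPattern n)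

lemma exists_isGreatest_entropy_add [Nonempty A] (hφ : Continuous φ) (β : ℝ) :
    ∃ μ : Measure (Cfg d A), IsProbabilityMeasure μ ∧ Invariant μ ∧
      IsGreatest {r | ∃ μ : Measure (Cfg d A), IsProbabilityMeasure μ ∧ Invariant μ ∧
        r = entropy μ + β * ∫ x, φ x ∂μ} (entropy μ + β * ∫ x, φ x ∂μ) := by
  have usc : UpperSemicontinuous fun μ : ProbabilityMeasure (Cfg d A) =>
      entropy (μ : Measure (Cfg d A)) + β * ∫ x, φ x ∂(μ : Measure (Cfg d A)) :=
    upperSemicontinuous_entropy.add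
      (continuous_const.mul (continuous_integral_probabilityMeasure hφ)).upperSemicontinuous
  obtain ⟨μ, hμ, hmax⟩ := (usc.upperSemicontinuousOn _).exists_isMaxOn
    ⟨⟨uniformBernoulli d A, inferInstance⟩, invariant_uniformBernoulli⟩
    isClosed_setOf_invariant.isCompact
  refine ⟨μ, inferInstance, hμ, ⟨μ, inferInstance, hμ, rfl⟩, ?_⟩
  rintro _ ⟨ν, hprob, hinv, rfl⟩
  exact hmax (a := ⟨ν, hprob⟩) hinv

lemma ES_nonempty [Nonempty A] (hφ : Continuous φ) (β : ℝ) : (ES φ β).Nonempty :=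
  let ⟨μ, hprob, hinv, hmax⟩ := exists_isGreatest_entropy_add hφ β
  ⟨μ, hprob, hinv, hmax.csSup_eq.symm⟩

lemma entropy_add_le_pressure (hφ : Continuous φ) (β : ℝ) {μ : Measure (Cfg d A)}
    [hprob : IsProbabilityMeasure μ] (hμ : Invariant μ) :
    entropy μ + β * ∫ x, φ x ∂μ ≤ pressure φ β := by
  have : Nonempty A := (nonempty_of_isProbabilityMeasure μ).map fun x => x 0
  obtain ⟨_, -, -, hmax⟩ := exists_isGreatest_entropy_add hφ β
  exact le_csSup ⟨_, hmax.2⟩ ⟨μ, hprob, hμ, rfl⟩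

lemma pressure_antitone [Nonempty A] (hφ : Continuous φ) (hφ_nonpos : φ ≤ 0) :
    Antitone (pressure φ) := by
  intro β β' hβ
  obtain ⟨μ, _, hinv, hμ⟩ := ES_nonempty hφ β'
  calc pressure φ β' = entropy μ + β' * ∫ x, φ x ∂μ := hμ.symm
    _ ≤ entropy μ + β * ∫ x, φ x ∂μ := by
      gcongr entropy μ + ?_
      exact mul_le_mul_of_nonpos_right hβ (integral_nonpos hφ_nonpos)
    _ ≤ pressure φ β := entropy_add_le_pressure hφ β hinv

lemma mem_ES_of_convexComb_mem_ES (hd : 1 ≤ d) (hφ : Continuous φ) {β : ℝ}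
    {ν₀ ν₁ : Measure (Cfg d A)} [IsProbabilityMeasure ν₀] [IsProbabilityMeasure ν₁]
    (h₀ : Invariant ν₀) (h₁ : Invariant ν₁) {a b : ℝ≥0} (hab : a + b = 1) (ha : a ≠ 0)
    (h : a • ν₀ + b • ν₁ ∈ ES φ β) : ν₀ ∈ ES φ β := by
  refine ⟨inferInstance, h₀, (entropy_add_le_pressure hφ β h₀).antisymm ?_⟩
  have h_entropy := entropy_convexComb_le hd h₀ h₁ hab
  have h_integral : ∫ x, φ x ∂(a • ν₀ + b • ν₁) = a * ∫ x, φ x ∂ν₀ + b * ∫ x, φ x ∂ν₁ := by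
    rw [integral_add_measure (integrable_of_continuous hφ _) (integrable_of_continuous hφ _),
      integral_smul_nnreal_measure, integral_smul_nnreal_measure]
    rfl
  have h_le₁ : b * (entropy ν₁ + β * ∫ x, φ x ∂ν₁) ≤ b * pressure φ β := by
    gcongr; exact entropy_add_le_pressure hφ β h₁
  have h_eq : entropy (a • ν₀ + b • ν₁) + β * ∫ x, φ x ∂(a • ν₀ + b • ν₁) = pressure φ β := h.2.2
  have hb : (b : ℝ) = 1 - a := eq_sub_of_add_eq' (by exact_mod_cast hab)
  have h_mul : a * pressure φ β ≤ a * (entropy ν₀ + β * ∫ x, φ x ∂ν₀) := by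
    rw [h_integral] at h_eq
    rw [hb] at h_entropy h_eq h_le₁
    linarith
  exact le_of_mul_le_mul_left h_mul (by positivity)

lemma cond_mem_ES (hd : 1 ≤ d) (hφ : Continuous φ) {β : ℝ} {μ : Measure (Cfg d A)}
    (hμ : μ ∈ ES φ β) {s : Set (Cfg d A)} (hs : MeasurableSet s)
    (hinv : ∀ n, shift n ⁻¹' s = s) (hμs : μ s ≠ 0) : ProbabilityTheory.cond μ s ∈ ES φ β := by
  have : IsProbabilityMeasure μ := hμ.1
  by_cases hμsc : μ sᶜ = 0
  · rwa [show ProbabilityTheory.cond μ s = μ by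
      rw [ProbabilityTheory.cond, (prob_compl_eq_zero_iff hs).1 hμsc, inv_one, one_smul,
        Measure.restrict_eq_self_of_ae_mem (show ∀ᵐ x ∂μ, x ∈ s from hμsc)]]
  have := ProbabilityTheory.cond_isProbabilityMeasure hμs
  have := ProbabilityTheory.cond_isProbabilityMeasure hμsc
  refine mem_ES_of_convexComb_mem_ES hd hφ (hμ.2.1.cond hs hinv)
    (hμ.2.1.cond hs.compl fun n => by rw [Set.preimage_compl, hinv])
    (a := (μ s).toNNReal) (b := (μ sᶜ).toNNReal) ?_ ?_
    ((smul_cond_add_smul_cond_compl μ hs).symm ▸ hμ)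
  · rw [← ENNReal.toNNReal_add (by finiteness) (by finiteness), prob_add_prob_compl hs]
    rfl
  · exact ENNReal.toNNReal_ne_zero.2 ⟨hμs, by finiteness⟩

end EquilibriumStates

section FreezingTransition

variable {d : ℕ} {A : Type} [Fintype A] [MeasurableSpace A] {X₀ : Set (Cfg d A)}
  {φ : Cfg d A → ℝ}

/-- The infimum of the inverse temperatures at which the pressure of `φ` equals `h_top(X₀)`. It is
a junk value when there is no such inverse temperature or when they are unbounded below. -/
noncomputable def criticalBeta (φ : Cfg d A → ℝ) (X₀ : Set (Cfg d A)) : ℝ :=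
  sInf {β | pressure φ β = topEnt X₀}

lemma freezingPT_of_forall_lt {βc : ℝ} {M : Set (Measure (Cfg d A))} {μ : Measure (Cfg d A)}
    (h_above : ∀ β, βc < β → ES φ β = M) (hμ : μ ∈ M) (h_below : ∀ β, β < βc → μ ∉ ES φ β) :
    FreezingPT φ βc :=
  ⟨fun β β' hβ hβ' => (h_above β hβ).trans (h_above β' hβ').symm,
    fun β β' hβ hβ' h => h_below β hβ (by rwa [h, h_above β' hβ'])⟩

variable [TopologicalSpace A] [DiscreteTopology A] [BorelSpace A]

lemma IsMME.topEnt_le_pressure (hX₀ : IsClosed X₀) (hφ : Continuous φ)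
    (hφ_zero : ∀ x ∈ X₀, φ x = 0) {μ : Measure (Cfg d A)} (hμ : IsMME X₀ μ) (β : ℝ) :
    topEnt X₀ ≤ pressure φ β := by
  obtain ⟨_, hinv, hμX₀, hent⟩ := hμ
  have h := entropy_add_le_pressure hφ β hinv
  rwa [integral_eq_zero_of_measure_eq_one hX₀.measurableSet hφ_zero hμX₀, mul_zero, add_zero,
    hent] at h

lemma pressure_le_of_mem_ES_of_measure_ne_zero (hd : 1 ≤ d) (hX₀ : IsSubshift X₀)
    (hφ : Continuous φ) (hφ_zero : ∀ x ∈ X₀, φ x = 0) {β : ℝ} {μ : Measure (Cfg d A)}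
    (hμ : μ ∈ ES φ β) (hμX₀ : μ X₀ ≠ 0) (β' : ℝ) : pressure φ β ≤ pressure φ β' := by
  have hmeas : MeasurableSet X₀ := hX₀.2.1.measurableSet
  have : IsProbabilityMeasure μ := hμ.1
  obtain ⟨_, hinv, hν⟩ := cond_mem_ES hd hφ hμ hmeas hX₀.preimage_shift hμX₀
  have h_integral : ∫ x, φ x ∂(ProbabilityTheory.cond μ X₀) = 0 :=
    integral_eq_zero_of_ae ((ProbabilityTheory.ae_cond_mem hmeas).mono hφ_zero)
  have h := entropy_add_le_pressure hφ β' hinv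
  rw [h_integral, mul_zero, add_zero] at h hν
  exact hν.symm.trans_le h

lemma ES_eq_setOf_isMME (hX₀ : IsClosed X₀) (hφ : Continuous φ) (hφ_nonpos : φ ≤ 0)
    (hφ_zero : ∀ x, φ x = 0 ↔ x ∈ X₀) {β β' : ℝ} (hβ : pressure φ β = topEnt X₀)
    (hβ' : pressure φ β' = topEnt X₀) (hlt : β' < β) : ES φ β = {μ | IsMME X₀ μ} := by
  have integral_eq_zero_iff (μ : Measure (Cfg d A)) [IsProbabilityMeasure μ] :
      ∫ x, φ x ∂μ = 0 ↔ μ X₀ = 1 :=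
    integral_eq_zero_iff_measure_eq_one (integrable_of_continuous hφ μ) hφ_nonpos
      hX₀.measurableSet hφ_zero
  ext μ
  constructor
  · rintro ⟨hprob, hinv, hμ⟩
    have h_integral : ∫ x, φ x ∂μ = 0 := by
      refine (integral_nonpos hφ_nonpos).antisymm ?_
      have h_mul : (β' - β) * ∫ x, φ x ∂μ ≤ 0 := by
        linarith [entropy_add_le_pressure hφ β' hinv]
      exact nonneg_of_mul_nonpos_right h_mul (sub_neg.2 hlt)
    rw [h_integral, mul_zero, add_zero, hβ] at hμ
    exact ⟨hprob, hinv, (integral_eq_zero_iff μ).1 h_integral, hμ⟩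
  · rintro ⟨hprob, hinv, hμX₀, hent⟩
    exact ⟨hprob, hinv,
      by rw [(integral_eq_zero_iff μ).2 hμX₀, mul_zero, add_zero, hent, hβ]⟩

lemma log_card_add_le_pressure [Nonempty A] (hφ : Continuous φ) (β : ℝ) :
    Real.log (Fintype.card A) + β * ∫ x, φ x ∂(uniformBernoulli d A) ≤ pressure φ β := by
  rw [← entropy_uniformBernoulli (d := d)]
  exact entropy_add_le_pressure hφ β invariant_uniformBernoulli

lemma exists_pos_mem_lowerBounds_setOf_pressure_eq (hX₀ : IsSubshift X₀) (hne : X₀ ≠ Set.univ)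
    (hφ : Continuous φ) (hφ_nonpos : φ ≤ 0) :
    ∃ ε, 0 < ε ∧ ε ∈ lowerBounds {β | pressure φ β = topEnt X₀} := by
  have : Nonempty A := ⟨hX₀.1.some 0⟩
  have hgap : 0 < Real.log (Fintype.card A) - topEnt X₀ :=
    sub_pos.2 (hX₀.topEnt_lt_log_card hne)
  have hc : ∫ x, φ x ∂(uniformBernoulli d A) ≤ 0 := integral_nonpos hφ_nonpos
  set c := ∫ x, φ x ∂(uniformBernoulli d A)
  refine ⟨(Real.log (Fintype.card A) - topEnt X₀) / (1 - c),
    div_pos hgap (by linarith), fun β hβ => ?_⟩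
  have hle : Real.log (Fintype.card A) - topEnt X₀ ≤ β * -c := by
    linarith [log_card_add_le_pressure hφ β, hβ.le]
  have hβ_pos : 0 < β := pos_of_mul_pos_left (hgap.trans_le hle) (neg_nonneg.2 hc)
  rw [div_le_iff₀ (by linarith)]
  linarith

lemma bddBelow_setOf_pressure_eq_topEnt (hX₀ : IsSubshift X₀) (hne : X₀ ≠ Set.univ)
    (hφ : Continuous φ) (hφ_nonpos : φ ≤ 0) : BddBelow {β | pressure φ β = topEnt X₀} :=
  let ⟨ε, _, hε⟩ := exists_pos_mem_lowerBounds_setOf_pressure_eq hX₀ hne hφ hφ_nonpos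
  ⟨ε, hε⟩

lemma criticalBeta_pos (hX₀ : IsSubshift X₀) (hne : X₀ ≠ Set.univ) (hφ : Continuous φ)
    (hφ_nonpos : φ ≤ 0) {β : ℝ} (hβ : pressure φ β = topEnt X₀) : 0 < criticalBeta φ X₀ :=
  let ⟨_, hpos, hε⟩ := exists_pos_mem_lowerBounds_setOf_pressure_eq hX₀ hne hφ hφ_nonpos
  hpos.trans_le (le_csInf ⟨β, hβ⟩ hε)

lemma criticalBeta_le (hX₀ : IsSubshift X₀) (hne : X₀ ≠ Set.univ) (hφ : Continuous φ)
    (hφ_nonpos : φ ≤ 0) {β : ℝ} (hβ : pressure φ β = topEnt X₀) : criticalBeta φ X₀ ≤ β :=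
  csInf_le (bddBelow_setOf_pressure_eq_topEnt hX₀ hne hφ hφ_nonpos) hβ

lemma ES_eq_setOf_isMME_of_criticalBeta_lt (hX₀ : IsSubshift X₀) (hφ : Continuous φ)
    (hφ_nonpos : φ ≤ 0) (hφ_zero : ∀ x, φ x = 0 ↔ x ∈ X₀) {μ : Measure (Cfg d A)}
    (hμ : IsMME X₀ μ) {β₀ : ℝ} (hβ₀ : pressure φ β₀ = topEnt X₀) {β : ℝ}
    (hβ : criticalBeta φ X₀ < β) : ES φ β = {μ | IsMME X₀ μ} := by
  have : Nonempty A := ⟨hX₀.1.some 0⟩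
  obtain ⟨β', hβ', hlt⟩ := exists_lt_of_csInf_lt ⟨β₀, hβ₀⟩ hβ
  have hpressure : pressure φ β = topEnt X₀ :=
    ((pressure_antitone hφ hφ_nonpos hlt.le).trans_eq hβ').antisymm
      (hμ.topEnt_le_pressure hX₀.2.1 hφ (fun x => (hφ_zero x).2) β)
  exact ES_eq_setOf_isMME hX₀.2.1 hφ hφ_nonpos hφ_zero hpressure hβ' hlt

lemma measure_eq_zero_of_lt_criticalBeta (hd : 1 ≤ d) (hX₀ : IsSubshift X₀)
    (hne : X₀ ≠ Set.univ) (hφ : Continuous φ) (hφ_nonpos : φ ≤ 0) (hφ_zero : ∀ x ∈ X₀, φ x = 0)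
    {ν : Measure (Cfg d A)} (hν : IsMME X₀ ν) {β₀ : ℝ} (hβ₀ : pressure φ β₀ = topEnt X₀)
    {β : ℝ} (hβ : β < criticalBeta φ X₀) {μ : Measure (Cfg d A)} (hμ : μ ∈ ES φ β) :
    μ X₀ = 0 := by
  by_contra hμX₀
  have hle : pressure φ β ≤ topEnt X₀ :=
    (pressure_le_of_mem_ES_of_measure_ne_zero hd hX₀ hφ hφ_zero hμ hμX₀ β₀).trans_eq hβ₀
  have heq : pressure φ β = topEnt X₀ :=
    hle.antisymm (hν.topEnt_le_pressure hX₀.2.1 hφ hφ_zero β)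
  exact hβ.not_ge (criticalBeta_le hX₀ hne hφ hφ_nonpos heq)

theorem statement4_general (hd : 1 ≤ d) (hX₀ : IsSubshift X₀) (hne : X₀ ≠ Set.univ)
    (hφ : Continuous φ) (hφ_zero : ∀ x ∈ X₀, φ x = 0) (hφ_neg : ∀ x ∉ X₀, φ x < 0)
    {β₀ : ℝ} (hβ₀ : pressure φ β₀ = topEnt X₀) (hmme : ∃ μ, IsMME X₀ μ) :
    ∃ βc : ℝ, 0 < βc ∧ βc ≤ β₀ ∧ FreezingPT φ βc ∧
      (∀ β : ℝ, βc < β → ES φ β = {μ | IsMME X₀ μ}) ∧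
      (∀ β : ℝ, β < βc → ∀ μ ∈ ES φ β, μ X₀ = 0) := by
  obtain ⟨ν, hν⟩ := hmme
  have hφ_nonpos : φ ≤ 0 := fun x =>
    (em (x ∈ X₀)).elim (fun hx => (hφ_zero x hx).le) fun hx => (hφ_neg x hx).le
  have hφ_zero_iff (x) : φ x = 0 ↔ x ∈ X₀ :=
    ⟨fun h => by_contra fun hx => (hφ_neg x hx).ne h, hφ_zero x⟩
  have above (β) (hβ : criticalBeta φ X₀ < β) : ES φ β = {μ | IsMME X₀ μ} :=
    ES_eq_setOf_isMME_of_criticalBeta_lt hX₀ hφ hφ_nonpos hφ_zero_iff hν hβ₀ hβ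
  have below (β) (hβ : β < criticalBeta φ X₀) (μ) (hμ : μ ∈ ES φ β) : μ X₀ = 0 :=
    measure_eq_zero_of_lt_criticalBeta hd hX₀ hne hφ hφ_nonpos hφ_zero hν hβ₀ hβ hμ
  have ν_notMem (β) (hβ : β < criticalBeta φ X₀) : ν ∉ ES φ β := fun h =>
    one_ne_zero (hν.2.2.1.symm.trans (below β hβ ν h))
  exact ⟨criticalBeta φ X₀, criticalBeta_pos hX₀ hne hφ hφ_nonpos hβ₀,
    criticalBeta_le hX₀ hne hφ hφ_nonpos hβ₀, freezingPT_of_forall_lt above hν ν_notMem,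
    above, below⟩

end FreezingTransition

/-- **Proposition 3.5.** If `φ` vanishes on the proper subshift `X₀`, is
negative off `X₀`, `p_φ(1) = h_top(X₀)`, and `ES(φ)` is exactly the set of measures of
maximal entropy of `X₀`, then there is `β_c ∈ (0,1]` at which `φ` has a freezing phase
transition; for `β > β_c`, `ES(βφ)` is the set of measures of maximal entropy on `X₀`,
while for `β < β_c`, `μ(X₀) = 0` for all `μ ∈ ES(βφ)`. -/
theorem statement4 (d : ℕ) (hd : 1 ≤ d) (A : Type) [Fintype A] [TopologicalSpace A]
    [DiscreteTopology A] [MeasurableSpace A] [BorelSpace A]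
    (X₀ : Set (Cfg d A)) (hsub : IsSubshift X₀) (hproper : X₀ ≠ Set.univ)
    (φ : Cfg d A → ℝ) (hφ : Continuous φ)
    (h1 : (∀ x ∈ X₀, φ x = 0) ∧ ∀ x ∉ X₀, φ x < 0)
    (h2 : pressure φ 1 = topEnt X₀)
    (h3 : ES φ 1 = { μ | IsMME X₀ μ }) :
    ∃ βc : ℝ, 0 < βc ∧ βc ≤ 1 ∧ FreezingPT φ βc ∧
      (∀ β : ℝ, βc < β → ES φ β = { μ | IsMME X₀ μ }) ∧
      (∀ β : ℝ, β < βc → ∀ μ ∈ ES φ β, μ X₀ = 0) := by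
  have : Nonempty A := ⟨hsub.1.some 0⟩
  exact statement4_general hd hsub hproper hφ h1.1 h1.2 h2 (h3.subst (ES_nonempty hφ 1))

end Freezing
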